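/- There exist entanglement-annihilating channels which are not entanglement-breaking: for λ = 1/√3, the two-qubit channel E_λ⊗E_λ (with E_λ the qubit depolarizing channel) maps every two-qubit state to a separable state, yet it is not entanglement-breaking, since applying (E_λ⊗E_λ)⊗id to the three-qubit GHZ state |GHZ⟩⟨GHZ| (|GHZ⟩ = (|000⟩+|111⟩)/√2) produces a state that is entangled across the cut separating the first two qubits from the third. -/

import Mathlib

open Matrix
open scoped Kronecker ComplexOrder

/-- A quantum state: a positive semidefinite matrix of unit trace. -/
def IsState {ι : Type} [Fintype ι] (ρ : Matrix ι ι ℂ) : Prop :=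
  ρ.PosSemidef ∧ ρ.trace = 1

/-- Separability of a bipartite state across the `ιA | ιB` cut: a finite convex
combination of Kronecker products of states. -/
def IsSep {ιA ιB : Type} [Fintype ιA] [Fintype ιB]
    (ω : Matrix (ιA × ιB) (ιA × ιB) ℂ) : Prop :=
  ∃ (m : ℕ) (p : Fin m → ℝ) (ξ : Fin m → Matrix ιA ιA ℂ) (ζ : Fin m → Matrix ιB ιB ℂ),
    (∀ j, 0 ≤ p j) ∧ ((∑ j, p j) = 1) ∧ (∀ j, IsState (ξ j)) ∧ (∀ j, IsState (ζ j)) ∧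
    ω = ∑ j, (p j : ℂ) • (ξ j ⊗ₖ ζ j)

/-- The extension `E ⊗ id` of a map `E` by a trivial action on an `n`-dimensional ancilla. -/
def tensorId {ι : Type} (E : Matrix ι ι ℂ → Matrix ι ι ℂ) (n : ℕ)
    (X : Matrix (ι × Fin n) (ι × Fin n) ℂ) : Matrix (ι × Fin n) (ι × Fin n) ℂ :=
  Matrix.of fun p q => E (Matrix.of fun a c => X (a, p.2) (c, q.2)) p.1 q.1

/-- A quantum channel: a linear, trace-preserving, completely positive map. -/
def IsChannel {ι : Type} [Fintype ι] (E : Matrix ι ι ℂ → Matrix ι ι ℂ) : Prop :=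
  (∀ (c : ℂ) (X Y : Matrix ι ι ℂ), E (c • X + Y) = c • E X + E Y) ∧
  (∀ X, (E X).trace = X.trace) ∧
  (∀ (n : ℕ) (X : Matrix (ι × Fin n) (ι × Fin n) ℂ), X.PosSemidef → (tensorId E n X).PosSemidef)

/-- Entanglement-breaking channel: `E ⊗ id` maps every state to a separable state,
for every ancilla dimension `n ≥ 1`. -/
def IsEB {ι : Type} [Fintype ι] (E : Matrix ι ι ℂ → Matrix ι ι ℂ) : Prop :=
  ∀ (n : ℕ), 0 < n → ∀ ω : Matrix (ι × Fin n) (ι × Fin n) ℂ,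
    IsState ω → IsSep (tensorId E n ω)

/-- Entanglement-annihilating channel on a bipartite system: every state is mapped
to a separable state. -/
def IsEA {ιA ιB : Type} [Fintype ιA] [Fintype ιB]
    (E : Matrix (ιA × ιB) (ιA × ιB) ℂ → Matrix (ιA × ιB) (ιA × ιB) ℂ) : Prop :=
  ∀ ω : Matrix (ιA × ιB) (ιA × ιB) ℂ, IsState ω → IsSep (E ω)

/-- The map `F ⊗ id` acting as `F` on the first factor of a bipartite system. -/
def rTensor {ιA ιB : Type} (F : Matrix ιA ιA ℂ → Matrix ιA ιA ℂ)
    (X : Matrix (ιA × ιB) (ιA × ιB) ℂ) : Matrix (ιA × ιB) (ιA × ιB) ℂ :=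
  Matrix.of fun p q => F (Matrix.of fun a c => X (a, p.2) (c, q.2)) p.1 q.1

/-- The map `id ⊗ F` acting as `F` on the second factor of a bipartite system. -/
def lTensor {ιA ιB : Type} (F : Matrix ιB ιB ℂ → Matrix ιB ιB ℂ)
    (X : Matrix (ιA × ιB) (ιA × ιB) ℂ) : Matrix (ιA × ιB) (ιA × ιB) ℂ :=
  Matrix.of fun p q => F (Matrix.of fun b d => X (p.1, b) (q.1, d)) p.2 q.2

/-- The local map `E ⊗ F` on a bipartite system (for linear `E`, `F` this is the
usual tensor product map `(id ⊗ F) ∘ (E ⊗ id)`). -/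
def tensorMap {ιA ιB : Type} (E : Matrix ιA ιA ℂ → Matrix ιA ιA ℂ)
    (F : Matrix ιB ιB ℂ → Matrix ιB ιB ℂ)
    (X : Matrix (ιA × ιB) (ιA × ιB) ℂ) : Matrix (ιA × ιB) (ιA × ιB) ℂ :=
  lTensor F (rTensor E X)

/-- `k`-fold Kronecker product of single-particle matrices. -/
def kronPow {d k : ℕ} (ρ : Fin k → Matrix (Fin d) (Fin d) ℂ) :
    Matrix (Fin k → Fin d) (Fin k → Fin d) ℂ :=
  Matrix.of fun i j => ∏ t, ρ t (i t) (j t)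

/-- Full separability of a `k`-partite state: a finite convex combination of
`k`-fold Kronecker products of single-particle states. -/
def IsFullySep {d k : ℕ} (ω : Matrix (Fin k → Fin d) (Fin k → Fin d) ℂ) : Prop :=
  ∃ (m : ℕ) (p : Fin m → ℝ) (ρ : Fin m → Fin k → Matrix (Fin d) (Fin d) ℂ),
    (∀ j, 0 ≤ p j) ∧ ((∑ j, p j) = 1) ∧ (∀ j t, IsState (ρ j t)) ∧
    ω = ∑ j, (p j : ℂ) • kronPow (ρ j)

/-- The map applying `E` to the `t`-th particle of a `k`-partite system. -/
def applyAt {d k : ℕ} (E : Matrix (Fin d) (Fin d) ℂ → Matrix (Fin d) (Fin d) ℂ) (t : Fin k)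
    (X : Matrix (Fin k → Fin d) (Fin k → Fin d) ℂ) :
    Matrix (Fin k → Fin d) (Fin k → Fin d) ℂ :=
  Matrix.of fun i j =>
    E (Matrix.of fun a b => X (Function.update i t a) (Function.update j t b)) (i t) (j t)

/-- The `k`-fold tensor power `E ⊗ ⋯ ⊗ E` of a single-particle map `E`,
obtained by applying `E` to each of the `k` particles. -/
def tensorPow {d : ℕ} (E : Matrix (Fin d) (Fin d) ℂ → Matrix (Fin d) (Fin d) ℂ) (k : ℕ)
    (X : Matrix (Fin k → Fin d) (Fin k → Fin d) ℂ) :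
    Matrix (Fin k → Fin d) (Fin k → Fin d) ℂ :=
  (List.finRange k).foldr (applyAt E) X

/-- The qubit depolarizing channel `E_λ[X] = λ X + (1-λ) tr(X) I/2`. -/
noncomputable def depol (lam : ℝ) (X : Matrix (Fin 2) (Fin 2) ℂ) : Matrix (Fin 2) (Fin 2) ℂ :=
  (lam : ℂ) • X + ((1 - lam : ℝ) : ℂ) • X.trace • ((2 : ℂ)⁻¹ • (1 : Matrix (Fin 2) (Fin 2) ℂ))

/-- The maximally entangled two-qubit vector `(|00⟩ + |11⟩)/√2`. -/
noncomputable def psiPlus : (Fin 2 × Fin 2) → ℂ :=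
  fun p => if p.1 = p.2 then ((Real.sqrt 2 : ℝ) : ℂ)⁻¹ else 0

/-- The projection onto the maximally entangled two-qubit vector. -/
noncomputable def Pplus : Matrix (Fin 2 × Fin 2) (Fin 2 × Fin 2) ℂ :=
  Matrix.vecMulVec psiPlus (star psiPlus)

/-- Partial transposition on the second qubit of a two-qubit matrix. -/
def ptB (X : Matrix (Fin 2 × Fin 2) (Fin 2 × Fin 2) ℂ) :
    Matrix (Fin 2 × Fin 2) (Fin 2 × Fin 2) ℂ :=
  Matrix.of fun p q => X (p.1, q.2) (q.1, p.2)

/-- Partial transposition on the first factor (qubit 1 versus qubits 2,3). -/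
def pt1 (X : Matrix (Fin 2 × Fin 2 × Fin 2) (Fin 2 × Fin 2 × Fin 2) ℂ) :
    Matrix (Fin 2 × Fin 2 × Fin 2) (Fin 2 × Fin 2 × Fin 2) ℂ :=
  Matrix.of fun p q => X (q.1, p.2) (p.1, q.2)

/-- The three-qubit GHZ vector `(|000⟩ + |111⟩)/√2`. -/
noncomputable def ghzVec : (Fin 2 × Fin 2 × Fin 2) → ℂ :=
  fun p => if p.1 = p.2.1 ∧ p.2.1 = p.2.2 then ((Real.sqrt 2 : ℝ) : ℂ)⁻¹ else 0

/-- The three-qubit GHZ state `|GHZ⟩⟨GHZ|`. -/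
noncomputable def ghzState : Matrix (Fin 2 × Fin 2 × Fin 2) (Fin 2 × Fin 2 × Fin 2) ℂ :=
  Matrix.vecMulVec ghzVec (star ghzVec)


/-- The three-qubit GHZ vector, with the first two qubits grouped together. -/
noncomputable def ghzVec' : ((Fin 2 × Fin 2) × Fin 2) → ℂ :=
  fun p => if p.1.1 = p.1.2 ∧ p.1.2 = p.2 then ((Real.sqrt 2 : ℝ) : ℂ)⁻¹ else 0

/-- The three-qubit GHZ state `|GHZ⟩⟨GHZ|`, with the first two qubits grouped
together. -/
noncomputable def ghzState' : Matrix ((Fin 2 × Fin 2) × Fin 2) ((Fin 2 × Fin 2) × Fin 2) ℂ :=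
  Matrix.vecMulVec ghzVec' (star ghzVec')

/-- The (unnormalised) cone of separable operators. -/
def sepCone (ιA ιB : Type) : AddSubmonoid (Matrix (ιA × ιB) (ιA × ιB) ℂ) :=
  AddSubmonoid.closure {ω | ∃ A B, A.PosSemidef ∧ B.PosSemidef ∧ ω = A ⊗ₖ B}

theorem kron_mem_sepCone {ιA ιB : Type} {A : Matrix ιA ιA ℂ} {B : Matrix ιB ιB ℂ}
    (hA : A.PosSemidef) (hB : B.PosSemidef) : A ⊗ₖ B ∈ sepCone ιA ιB :=
  AddSubmonoid.subset_closure ⟨A, B, hA, hB, rfl⟩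

theorem psd_normalise {ι : Type} [Fintype ι] [DecidableEq ι] [Nonempty ι]
    {A : Matrix ι ι ℂ} (hA : A.PosSemidef) :
    ∃ (p : ℝ) (ξ : Matrix ι ι ℂ), 0 ≤ p ∧ IsState ξ ∧ A = (p : ℂ) • ξ := by
  by_cases h : A.trace = 0
  · rw [hA.trace_eq_zero_iff] at h
    obtain ⟨i⟩ := ‹Nonempty ι›
    refine ⟨0, Matrix.single i i 1, le_rfl, ⟨?_, by simp⟩, by simp [h]⟩
    have := Matrix.posSemidef_vecMulVec_self_star (Pi.single i (1 : ℂ) : ι → ℂ)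
    convert this using 1
    ext a b
    simp only [Matrix.single_apply, Matrix.vecMulVec_apply, Pi.star_apply, Pi.single_apply]
    by_cases h1 : a = i <;> by_cases h2 : b = i <;> simp [h1, h2, Ne.symm, eq_comm (a := i)]
  · have h0 := hA.trace_nonneg
    have hre : ((A.trace.re : ℝ) : ℂ) = A.trace := by
      rw [Complex.le_def] at h0
      apply Complex.ext <;> simp [← h0.2]
    have hp : 0 ≤ A.trace.re := (Complex.le_def.1 h0).1
    refine ⟨A.trace.re, A.trace⁻¹ • A, hp, ⟨?_, ?_⟩, ?_⟩
    · refine hA.smul ?_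
      rw [← hre, ← Complex.ofReal_inv]
      exact_mod_cast inv_nonneg.2 hp
    · simp [Matrix.trace_smul, h]
    · rw [hre, smul_smul, mul_inv_cancel₀ h, one_smul]

theorem isSep_of_mem {ιA ιB : Type} [Fintype ιA] [Fintype ιB] [DecidableEq ιA] [DecidableEq ιB]
    [Nonempty ιA] [Nonempty ιB] {ω : Matrix (ιA × ιB) (ιA × ιB) ℂ}
    (h : ω ∈ sepCone ιA ιB) (ht : ω.trace = 1) : IsSep ω := by
  have key : ∃ (κ : Type) (_ : Fintype κ) (p : κ → ℝ) (ξ : κ → Matrix ιA ιA ℂ)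
      (ζ : κ → Matrix ιB ιB ℂ), (∀ j, 0 ≤ p j) ∧ (∀ j, IsState (ξ j)) ∧ (∀ j, IsState (ζ j)) ∧
      ω = ∑ j, (p j : ℂ) • (ξ j ⊗ₖ ζ j) := by
    clear ht
    induction h using AddSubmonoid.closure_induction with
    | mem x hx =>
      obtain ⟨A, B, hA, hB, rfl⟩ := hx
      obtain ⟨p, ξ, hp, hξ, rfl⟩ := psd_normalise hA
      obtain ⟨q, ζ, hq, hζ, rfl⟩ := psd_normalise hB
      refine ⟨Unit, inferInstance, fun _ => p * q, fun _ => ξ, fun _ => ζ,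
        fun _ => mul_nonneg hp hq, fun _ => hξ, fun _ => hζ, ?_⟩
      rw [Matrix.smul_kronecker, Matrix.kronecker_smul, smul_smul]
      simp
    | zero =>
      exact ⟨Empty, inferInstance, fun _ => 0, fun _ => 0, fun _ => 0,
        fun j => j.elim, fun j => j.elim, fun j => j.elim, by simp⟩
    | add x y _ _ hx hy =>
      obtain ⟨κ, _, p, ξ, ζ, h1, h2, h3, rfl⟩ := hx
      obtain ⟨κ', _, p', ξ', ζ', h1', h2', h3', rfl⟩ := hy
      refine ⟨κ ⊕ κ', inferInstance, Sum.elim p p', Sum.elim ξ ξ', Sum.elim ζ ζ', ?_, ?_, ?_, ?_⟩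
      · rintro (j | j) <;> simp [h1, h1']
      · rintro (j | j) <;> simp [h2, h2']
      · rintro (j | j) <;> simp [h3, h3']
      · simp [Fintype.sum_sum_type]
  obtain ⟨κ, _, p, ξ, ζ, h1, h2, h3, h4⟩ := key
  let e := (Fintype.equivFin κ).symm
  refine ⟨Fintype.card κ, p ∘ e, ξ ∘ e, ζ ∘ e, fun j => h1 _, ?_, fun j => h2 _, fun j => h3 _, ?_⟩
  · have : (∑ j, (p j : ℂ)) = 1 := by
      rw [← ht, h4, Matrix.trace_sum]
      refine Finset.sum_congr rfl fun j _ => ?_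
      rw [Matrix.trace_smul, Matrix.trace_kronecker, (h2 j).2, (h3 j).2]
      simp
    have h5 : (∑ j, p j) = 1 := by exact_mod_cast this
    rw [← h5]
    exact Equiv.sum_comp e p
  · rw [h4]
    exact (Equiv.sum_comp e (fun j => (p j : ℂ) • (ξ j ⊗ₖ ζ j))).symm

/-! ### The maps -/

theorem depol_add (l : ℝ) (X Y : Matrix (Fin 2) (Fin 2) ℂ) :
    depol l (X + Y) = depol l X + depol l Y := by
  simp only [depol, Matrix.trace_add]
  module

theorem depol_smul (l : ℝ) (c : ℂ) (X : Matrix (Fin 2) (Fin 2) ℂ) :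
    depol l (c • X) = c • depol l X := by
  simp only [depol, Matrix.trace_smul, smul_eq_mul]
  module

theorem tm_add (l : ℝ) (X Y : Matrix (Fin 2 × Fin 2) (Fin 2 × Fin 2) ℂ) :
    tensorMap (depol l) (depol l) (X + Y) =
      tensorMap (depol l) (depol l) X + tensorMap (depol l) (depol l) Y := by
  have h1 : rTensor (depol l) (X + Y) = rTensor (depol l) X + rTensor (depol l) Y := by
    ext p q
    exact congrFun (congrFun (depol_add l (Matrix.of fun a c => X (a, p.2) (c, q.2))
      (Matrix.of fun a c => Y (a, p.2) (c, q.2))) p.1) q.1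
  have h2 : ∀ X Y : Matrix (Fin 2 × Fin 2) (Fin 2 × Fin 2) ℂ,
      lTensor (depol l) (X + Y) = lTensor (depol l) X + lTensor (depol l) Y := by
    intro X Y
    ext p q
    exact congrFun (congrFun (depol_add l (Matrix.of fun a c => X (p.1, a) (q.1, c))
      (Matrix.of fun a c => Y (p.1, a) (q.1, c))) p.2) q.2
  rw [tensorMap, h1, h2, tensorMap, tensorMap]

theorem tm_smul (l : ℝ) (c : ℂ) (X : Matrix (Fin 2 × Fin 2) (Fin 2 × Fin 2) ℂ) :
    tensorMap (depol l) (depol l) (c • X) = c • tensorMap (depol l) (depol l) X := by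
  have h1 : rTensor (depol l) (c • X) = c • rTensor (depol l) X := by
    ext p q
    exact congrFun (congrFun (depol_smul l c (Matrix.of fun a c => X (a, p.2) (c, q.2))) p.1) q.1
  have h2 : ∀ X : Matrix (Fin 2 × Fin 2) (Fin 2 × Fin 2) ℂ,
      lTensor (depol l) (c • X) = c • lTensor (depol l) X := by
    intro X
    ext p q
    exact congrFun (congrFun (depol_smul l c (Matrix.of fun a c => X (p.1, a) (q.1, c))) p.2) q.2
  rw [tensorMap, h1, h2, tensorMap]

theorem tm_kron (l : ℝ) (A B : Matrix (Fin 2) (Fin 2) ℂ) :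
    tensorMap (depol l) (depol l) (A ⊗ₖ B) = depol l A ⊗ₖ depol l B := by
  have h1 : rTensor (depol l) (A ⊗ₖ B) = depol l A ⊗ₖ B := by
    ext p q
    have := congrFun (congrFun (depol_smul l (B p.2 q.2) A) p.1) q.1
    simp only [Matrix.smul_apply, smul_eq_mul] at this
    rw [Matrix.kronecker_apply, mul_comm, ← this, rTensor]
    simp only [Matrix.of_apply, Matrix.kronecker_apply]
    congr 1
    congr 1
    ext a b
    simp [mul_comm]
  rw [tensorMap, h1]
  ext p q
  have := congrFun (congrFun (depol_smul l (depol l A p.1 q.1) B) p.2) q.2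
  simp only [Matrix.smul_apply, smul_eq_mul] at this
  rw [Matrix.kronecker_apply, ← this, lTensor]
  rfl

theorem tm_sum (l : ℝ) {κ : Type} (s : Finset κ)
    (f : κ → Matrix (Fin 2 × Fin 2) (Fin 2 × Fin 2) ℂ) :
    tensorMap (depol l) (depol l) (∑ k ∈ s, f k) =
      ∑ k ∈ s, tensorMap (depol l) (depol l) (f k) := by
  classical
  induction s using Finset.induction_on with
  | empty =>
    have := tm_smul l 0 0
    simpa using this
  | insert a s ha ih => rw [Finset.sum_insert ha, Finset.sum_insert ha, tm_add, ih]

theorem depol_trace (l : ℝ) (X : Matrix (Fin 2) (Fin 2) ℂ) : (depol l X).trace = X.trace := by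
  simp [depol, Matrix.trace_add, Matrix.trace_smul, Matrix.trace_one]
  ring

theorem tm_trace (l : ℝ) (X : Matrix (Fin 2 × Fin 2) (Fin 2 × Fin 2) ℂ) :
    (tensorMap (depol l) (depol l) X).trace = X.trace := by
  simp [tensorMap, lTensor, rTensor, depol, Matrix.trace, Fintype.sum_prod_type,
    Fin.sum_univ_two]
  ring

theorem depol_conj (l : ℝ) {U : Matrix (Fin 2) (Fin 2) ℂ} (hU : Uᴴ * U = 1)
    (X : Matrix (Fin 2) (Fin 2) ℂ) : depol l (U * X * Uᴴ) = U * depol l X * Uᴴ := by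
  have hU' : U * Uᴴ = 1 := mul_eq_one_comm.1 hU
  have ht : (U * X * Uᴴ).trace = X.trace := by
    rw [Matrix.trace_mul_comm, ← Matrix.mul_assoc, hU, Matrix.one_mul]
  simp only [depol, ht, Matrix.mul_add, Matrix.add_mul, Matrix.mul_smul, Matrix.smul_mul,
    Matrix.mul_one, hU']

/-! ### Canonical decomposition -/

/-- A qubit matrix with diagonal `(1±x)/2` and off-diagonal element `q`. -/
noncomputable def qb (x : ℝ) (q : ℂ) : Matrix (Fin 2) (Fin 2) ℂ :=
  !![(((1 + x) / 2 : ℝ) : ℂ), q; star q, (((1 - x) / 2 : ℝ) : ℂ)]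

theorem qb_psd {x : ℝ} {q : ℂ} (hx : x ^ 2 = 1 / 3) (hq : Complex.normSq q ≤ 1 / 6) :
    (qb x q).PosSemidef := by
  have hx1 : 0 < (1 + x) / 2 := by nlinarith [sq_nonneg (x + 1)]
  set p : ℝ := (1 + x) / 2 with hp
  have hr : Complex.normSq q / p ≤ (1 - x) / 2 := by
    rw [div_le_iff₀ hx1, hp]; nlinarith
  have h1 := (Matrix.posSemidef_vecMulVec_self_star ![(p : ℂ), star q]).smul
    (a := ((p⁻¹ : ℝ) : ℂ)) (by exact_mod_cast (inv_pos.2 hx1).le)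
  have h2 : (Matrix.diagonal ![(0 : ℂ), (((1 - x) / 2 - Complex.normSq q / p : ℝ) : ℂ)]).PosSemidef := by
    rw [Matrix.posSemidef_diagonal_iff]
    intro i
    fin_cases i
    · simp
    · simp only [Fin.mk_one, Matrix.cons_val_one, Matrix.cons_val_fin_one]
      exact_mod_cast sub_nonneg.2 hr
  have hpc : (p : ℂ) ≠ 0 := by exact_mod_cast hx1.ne'
  convert h1.add h2 using 1
  ext i j
  rw [Matrix.add_apply, Matrix.smul_apply, Matrix.vecMulVec_apply]
  fin_cases i <;> fin_cases j
  · simp [qb, ← hp, hpc]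
  · simp [qb, hpc]
  · simp [qb]
    field_simp
  · simp [qb, ← Complex.mul_conj]
    ring

theorem sepCone_smul {ιA ιB : Type} {r : ℝ} (hr : 0 ≤ r) {A : Matrix ιA ιA ℂ}
    {B : Matrix ιB ιB ℂ} (hA : A.PosSemidef) (hB : B.PosSemidef) :
    (r : ℂ) • (A ⊗ₖ B) ∈ sepCone ιA ιB := by
  rw [← Matrix.smul_kronecker]
  exact kron_mem_sepCone (hA.smul (by exact_mod_cast hr)) hB

theorem depol_single (l : ℝ) (s t : Fin 2) : depol l (Matrix.single s t 1) =
    if s = t then (if s = 0 then !![(1 + (l : ℂ)) / 2, 0; 0, (1 - (l : ℂ)) / 2]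
      else !![(1 - (l : ℂ)) / 2, 0; 0, (1 + (l : ℂ)) / 2])
    else (if s = 0 then !![0, (l : ℂ); 0, 0] else !![0, 0; (l : ℂ), 0]) := by
  ext i j
  fin_cases s <;> fin_cases t <;> fin_cases i <;> fin_cases j <;>
    simp [depol, Matrix.single_apply, Matrix.trace, Fin.sum_univ_two] <;> ring

theorem canonical {l : ℝ} (hl : l ^ 2 = 1 / 3) (a b : ℂ) :
    (∑ s : Fin 2, ∑ t : Fin 2, (![a, b] s * star (![a, b] t)) •
      (depol l (Matrix.single s t 1) ⊗ₖ depol l (Matrix.single s t 1))) ∈ sepCone (Fin 2) (Fin 2) := by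
  set N : ℝ := Complex.normSq a + Complex.normSq b with hN
  have ha := Complex.normSq_nonneg a
  have hb := Complex.normSq_nonneg b
  obtain ⟨t, ht1, ht2⟩ : ∃ t : ℂ, (N : ℂ) * t = a * star b ∧ Complex.normSq t ≤ 1 / 4 := by
    by_cases h0 : N = 0
    · have : Complex.normSq a = 0 := by linarith
      rw [Complex.normSq_eq_zero] at this
      exact ⟨0, by simp [this], by simp⟩
    · refine ⟨a * star b / N, by field_simp, ?_⟩
      have hNp : 0 < N := lt_of_le_of_ne (by linarith) (Ne.symm h0)
      rw [Complex.normSq_div, Complex.normSq_mul, Complex.normSq_ofReal]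
      simp only [Complex.star_def, Complex.normSq_conj]
      rw [div_le_iff₀ (by positivity)]
      nlinarith [sq_nonneg (Complex.normSq a - Complex.normSq b)]
  let k : ℂ := l * (1 + Complex.I) / 2
  let k' : ℂ := l * (1 - Complex.I) * t
  have hkk : k * k' * N = a * star b / 3 := by
    have hlc : (l : ℂ) ^ 2 = 1 / 3 := by rw [← Complex.ofReal_pow, hl]; norm_num
    have : k * k' * N = (l : ℂ) ^ 2 * (1 - Complex.I ^ 2) / 2 * (N * t) := by
      simp only [k, k']; ring
    rw [this, ht1, hlc, Complex.I_sq]; ring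
  have hk : Complex.normSq k ≤ 1 / 6 := by
    have : Complex.normSq k = l ^ 2 / 2 := by
      simp [k, Complex.normSq_apply]; ring
    rw [this, hl]; norm_num
  have hk' : Complex.normSq k' ≤ 1 / 6 := by
    have : Complex.normSq k' = l ^ 2 * 2 * Complex.normSq t := by
      simp only [k', Complex.normSq_mul, Complex.normSq_ofReal]
      have : Complex.normSq (1 - Complex.I) = 2 := by
        simp [Complex.normSq_apply]; norm_num
      rw [this]; ring
    rw [this, hl]; linarith
  have hm : ∀ u : ℂ, Complex.normSq u = 1 → ∀ x : ℝ, x ^ 2 = 1 / 3 → ∀ r : ℝ, 0 ≤ r →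
      (r : ℂ) • (qb x (k * u) ⊗ₖ qb x (k' * star u)) ∈ sepCone (Fin 2) (Fin 2) := by
    intro u hu x hx r hr
    apply sepCone_smul hr <;> apply qb_psd hx <;> rw [Complex.normSq_mul]
    · rw [hu]; linarith
    · rw [Complex.star_def, Complex.normSq_conj, hu]; linarith
  have hl' : (-l) ^ 2 = 1 / 3 := by rw [neg_sq, hl]
  have hsum := fun x hx r hr => add_mem (add_mem (add_mem (hm 1 (by simp) x hx r hr)
    (hm (-1) (by simp) x hx r hr)) (hm Complex.I (by simp) x hx r hr))
    (hm (-Complex.I) (by simp) x hx r hr)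
  have hfin := add_mem (hsum l hl (Complex.normSq a / 4) (by positivity))
    (hsum (-l) hl' (Complex.normSq b / 4) (by positivity))
  convert hfin using 1
  have hNc : (N : ℂ) = a * star a + b * star b := by
    simp [hN, Complex.mul_conj]
  have hna : ((Complex.normSq a : ℝ) : ℂ) = a * star a := by simp [Complex.mul_conj]
  have hnb : ((Complex.normSq b : ℝ) : ℂ) = b * star b := by simp [Complex.mul_conj]
  have hlc : (l : ℂ) ^ 2 = 1 / 3 := by rw [← Complex.ofReal_pow, hl]; norm_num
  have hkk2 : star k * star k' * N = star a * b / 3 := by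
    have := congrArg star hkk
    simp only [star_mul', star_div₀, star_star] at this
    simpa using this
  rw [hNc] at hkk hkk2
  have hI := Complex.I_sq
  clear_value k k'
  clear hfin hsum hm hk hk' ht1
  ext ⟨i1, i2⟩ ⟨j1, j2⟩
  fin_cases i1 <;> fin_cases i2 <;> fin_cases j1 <;> fin_cases j2 <;>
    simp [qb, depol_single, Fin.sum_univ_two, hna, hnb] at hkk hkk2 ⊢ <;>
    grind

/-! ### Schmidt decomposition -/

theorem exists_unitary_col (p q : ℂ) : ∃ (V : Matrix (Fin 2) (Fin 2) ℂ) (r : ℂ),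
    Vᴴ * V = 1 ∧ p = r * V 0 0 ∧ q = r * V 1 0 ∧ (r = 0 → p = 0 ∧ q = 0) := by
  by_cases h : Complex.normSq p + Complex.normSq q = 0
  · have hp := Complex.normSq_nonneg p
    have hq := Complex.normSq_nonneg q
    have h1 : p = 0 := Complex.normSq_eq_zero.1 (by linarith)
    have h2 : q = 0 := Complex.normSq_eq_zero.1 (by linarith)
    exact ⟨1, 0, by simp, by simp [h1], by simp [h2], fun _ => ⟨h1, h2⟩⟩
  · set n : ℝ := Complex.normSq p + Complex.normSq q with hn
    have hn0 : 0 ≤ n := add_nonneg (Complex.normSq_nonneg p) (Complex.normSq_nonneg q)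
    have hr2 : ((Real.sqrt n : ℝ) : ℂ) ^ 2 = p * star p + q * star q := by
      rw [← Complex.ofReal_pow, Real.sq_sqrt hn0, hn]
      simp [Complex.mul_conj]
    have hr0 : ((Real.sqrt n : ℝ) : ℂ) ≠ 0 := by
      have : Real.sqrt n ≠ 0 := by rw [Real.sqrt_ne_zero hn0]; exact h
      exact_mod_cast this
    have hrs : star ((Real.sqrt n : ℝ) : ℂ) = ((Real.sqrt n : ℝ) : ℂ) := by simp
    generalize ((Real.sqrt n : ℝ) : ℂ) = r at hr2 hr0 hrs
    refine ⟨!![p / r, -star q / r; q / r, star p / r], r, ?_, ?_, ?_, fun h => absurd h hr0⟩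
    · ext i j
      simp only [Complex.star_def] at hr2 hrs
      fin_cases i <;> fin_cases j <;>
        simp [Matrix.mul_apply, Fin.sum_univ_two, hrs] <;> field_simp <;>
        first | (rw [hr2]; ring) | ring
    · simp; field_simp
    · simp; field_simp

theorem rows_decomp (W : Matrix (Fin 2) (Fin 2) ℂ)
    (h : W 1 0 * star (W 0 0) + W 1 1 * star (W 0 1) = 0) :
    ∃ (V : Matrix (Fin 2) (Fin 2) ℂ) (a b : ℂ), Vᴴ * V = 1 ∧
      W = Matrix.diagonal ![a, b] * Vᵀ := by
  obtain ⟨V, r, hV, h0, h1, hr⟩ := exists_unitary_col (W 0 0) (W 0 1)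
  by_cases hr0 : r = 0
  · obtain ⟨V, s, hV, h2, h3, -⟩ := exists_unitary_col (W 1 0) (W 1 1)
    obtain ⟨h4, h5⟩ := hr hr0
    refine ⟨V * !![0, 1; 1, 0], 0, s, ?_, ?_⟩
    · have hS : (!![0, 1; 1, 0] : Matrix (Fin 2) (Fin 2) ℂ)ᴴ * !![0, 1; 1, 0] = 1 := by
        ext i j
        fin_cases i <;> fin_cases j <;> simp [Matrix.mul_apply, Fin.sum_univ_two]
      rw [Matrix.conjTranspose_mul, Matrix.mul_assoc, ← Matrix.mul_assoc Vᴴ, hV, Matrix.one_mul, hS]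
    · ext i j
      fin_cases i <;> fin_cases j <;>
        simp [Matrix.diagonal_mul, Matrix.mul_apply, Fin.sum_univ_two, h4, h5] <;> assumption
  · -- W 1 is orthogonal to the first column, hence a multiple of the second
    have hV' : V * Vᴴ = 1 := mul_eq_one_comm.1 hV
    have e00 := congrFun (congrFun hV' 0) 0
    have e01 := congrFun (congrFun hV' 0) 1
    have e10 := congrFun (congrFun hV' 1) 0
    have e11 := congrFun (congrFun hV' 1) 1
    simp [Matrix.mul_apply, Fin.sum_univ_two] at e00 e01 e10 e11
    have ho : W 1 0 * star (V 0 0) + W 1 1 * star (V 1 0) = 0 := by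
      rw [h0, h1, star_mul', star_mul'] at h
      have hsr : star r ≠ 0 := star_ne_zero.2 hr0
      apply mul_left_cancel₀ hsr
      rw [mul_zero, ← h]; ring
    simp only [Complex.star_def] at ho
    refine ⟨V, r, W 1 0 * star (V 0 1) + W 1 1 * star (V 1 1), hV, ?_⟩
    ext i j
    fin_cases i <;> fin_cases j <;> simp [Matrix.diagonal_mul]
    · exact h0
    · exact h1
    · linear_combination (V 0 0) * ho - W 1 0 * e00 - W 1 1 * e01
    · linear_combination (V 1 0) * ho - W 1 0 * e10 - W 1 1 * e11

theorem svd2 (M : Matrix (Fin 2) (Fin 2) ℂ) :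
    ∃ (U V : Matrix (Fin 2) (Fin 2) ℂ) (a b : ℂ), Uᴴ * U = 1 ∧ Vᴴ * V = 1 ∧
      M = U * Matrix.diagonal ![a, b] * Vᵀ := by
  have hH : (M * Mᴴ).IsHermitian := Matrix.isHermitian_mul_conjTranspose_self M
  let U : Matrix (Fin 2) (Fin 2) ℂ := hH.eigenvectorUnitary
  have hU : Uᴴ * U = 1 := Unitary.coe_star_mul_self hH.eigenvectorUnitary
  have hU' : U * Uᴴ = 1 := mul_eq_one_comm.1 hU
  have hd : Uᴴ * (M * Mᴴ) * U = Matrix.diagonal (RCLike.ofReal ∘ hH.eigenvalues) := by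
    have := hH.conjStarAlgAut_star_eigenvectorUnitary
    rw [Unitary.conjStarAlgAut_star_apply] at this
    exact this
  have hd2 : (Uᴴ * M) * (Uᴴ * M)ᴴ = Matrix.diagonal (RCLike.ofReal ∘ hH.eigenvalues) := by
    rw [← hd, Matrix.conjTranspose_mul, Matrix.conjTranspose_conjTranspose]
    simp only [Matrix.mul_assoc]
  obtain ⟨V, a, b, hV, hW⟩ := rows_decomp (Uᴴ * M) (by
    have := congrFun (congrFun hd2 1) 0
    rw [Matrix.mul_apply, Fin.sum_univ_two] at this
    simpa [Matrix.conjTranspose_apply] using this)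
  refine ⟨U, V, a, b, hU, hV, ?_⟩
  rw [Matrix.mul_assoc, ← hW, ← Matrix.mul_assoc, hU', Matrix.one_mul]

theorem conj_mem {A B : Matrix (Fin 2) (Fin 2) ℂ} {X : Matrix (Fin 2 × Fin 2) (Fin 2 × Fin 2) ℂ}
    (hX : X ∈ sepCone (Fin 2) (Fin 2)) :
    (A ⊗ₖ B) * X * (A ⊗ₖ B)ᴴ ∈ sepCone (Fin 2) (Fin 2) := by
  induction hX using AddSubmonoid.closure_induction with
  | mem x hx =>
    obtain ⟨P, Q, hP, hQ, rfl⟩ := hx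
    rw [Matrix.conjTranspose_kronecker, ← Matrix.mul_kronecker_mul, ← Matrix.mul_kronecker_mul]
    exact kron_mem_sepCone (hP.mul_mul_conjTranspose_same A) (hQ.mul_mul_conjTranspose_same B)
  | zero => simp
  | add x y _ _ hx hy =>
    rw [Matrix.mul_add, Matrix.add_mul]
    exact add_mem hx hy

theorem pure_mem {l : ℝ} (hl : l ^ 2 = 1 / 3) (ψ : Fin 2 × Fin 2 → ℂ) :
    tensorMap (depol l) (depol l) (Matrix.vecMulVec ψ (star ψ)) ∈ sepCone (Fin 2) (Fin 2) := by
  obtain ⟨U, V, a, b, hU, hV, hM⟩ := svd2 (Matrix.of fun i k => ψ (i, k))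
  have hψ : ∀ i k, ψ (i, k) = U i 0 * a * V k 0 + U i 1 * b * V k 1 := by
    intro i k
    have := congrFun (congrFun hM i) k
    simpa [Matrix.mul_apply, Fin.sum_univ_two, Matrix.diagonal_apply] using this
  have hdec : Matrix.vecMulVec ψ (star ψ) = ∑ s : Fin 2, ∑ t : Fin 2,
      (![a, b] s * star (![a, b] t)) •
      ((U * Matrix.single s t 1 * Uᴴ) ⊗ₖ (V * Matrix.single s t 1 * Vᴴ)) := by
    ext ⟨i, k⟩ ⟨j, m⟩
    simp [Fin.sum_univ_two, Matrix.vecMulVec_apply, hψ, Matrix.mul_apply, Matrix.single_apply,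
      Matrix.kronecker_apply]
    ring
  rw [hdec]
  simp only [tm_sum, tm_smul, tm_kron, depol_conj l hU, depol_conj l hV]
  have := conj_mem (A := U) (B := V) (canonical hl a b)
  convert this using 1
  simp only [Matrix.mul_sum, Matrix.sum_mul, Matrix.mul_smul, Matrix.smul_mul,
    Matrix.mul_kronecker_mul, Matrix.conjTranspose_kronecker]

theorem part_one {l : ℝ} (hl : l ^ 2 = 1 / 3) (ω : Matrix (Fin 2 × Fin 2) (Fin 2 × Fin 2) ℂ)
    (hω : IsState ω) : IsSep (tensorMap (depol l) (depol l) ω) := by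
  refine isSep_of_mem ?_ (by rw [tm_trace, hω.2])
  obtain ⟨m, v, rfl⟩ := Matrix.posSemidef_iff_eq_sum_vecMulVec.1 hω.1
  rw [tm_sum]
  exact sum_mem fun i _ => pure_mem hl _

/-! ### Entanglement of the GHZ output -/

theorem witness {ω : Matrix ((Fin 2 × Fin 2) × Fin 2) ((Fin 2 × Fin 2) × Fin 2) ℂ} (h : IsSep ω) :
    0 ≤ ω ((0, 0), 1) ((0, 0), 1) + ω ((1, 1), 0) ((1, 1), 0)
      - ω ((0, 0), 0) ((1, 1), 1) - ω ((1, 1), 1) ((0, 0), 0) := by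
  obtain ⟨m, p, ξ, ζ, hp, -, hξ, hζ, rfl⟩ := h
  simp only [Matrix.sum_apply, ← Finset.sum_add_distrib, ← Finset.sum_sub_distrib]
  refine Finset.sum_nonneg fun j _ => ?_
  have hP := (hξ j).1.kronecker (hζ j).1.transpose
  have hq := hP.dotProduct_mulVec_nonneg
    (Pi.single ((0, 0), 1) 1 - Pi.single ((1, 1), 0) 1)
  have h2 : (0 : ℂ) ≤ (p j : ℂ) := by exact_mod_cast hp j
  refine (mul_nonneg h2 hq).trans_eq ?_
  simp [Matrix.mulVec_sub, Matrix.kronecker_apply, sub_dotProduct, dotProduct_sub]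
  ring

theorem part_three {l : ℝ} (hl : l ^ 2 = 1 / 3) (h0 : 0 < l) :
    ¬ IsSep (rTensor (tensorMap (depol l) (depol l)) ghzState') := by
  intro h
  have hw := witness h
  have hs : ((Real.sqrt 2 : ℝ) : ℂ)⁻¹ * ((Real.sqrt 2 : ℝ) : ℂ)⁻¹ = 1 / 2 := by
    rw [← mul_inv, ← Complex.ofReal_mul, Real.mul_self_sqrt (by norm_num)]
    norm_num
  simp [rTensor, tensorMap, lTensor, depol, ghzState', ghzVec', Matrix.vecMulVec_apply,
    Matrix.trace, Fin.sum_univ_two, hs] at hw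
  have hlt : (1 - l) ^ 2 / 4 - l ^ 2 < 0 := by nlinarith
  have hw' : l * (l * 2⁻¹) ≤ (1 - l) * ((1 - l) * (2⁻¹ * 2⁻¹) * 2⁻¹)
      + (1 - l) * ((1 - l) * (2⁻¹ * 2⁻¹) * 2⁻¹) - l * (l * 2⁻¹) := by
    rw [← Complex.real_le_real]
    push_cast
    exact hw
  nlinarith

theorem ghz_isState : IsState ghzState' := by
  have hs : ((Real.sqrt 2 : ℝ) : ℂ)⁻¹ * ((Real.sqrt 2 : ℝ) : ℂ)⁻¹ = 1 / 2 := by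
    rw [← mul_inv, ← Complex.ofReal_mul, Real.mul_self_sqrt (by norm_num)]
    norm_num
  refine ⟨Matrix.posSemidef_vecMulVec_self_star _, ?_⟩
  simp [ghzState', ghzVec', Matrix.vecMulVec_apply, Matrix.trace, Fintype.sum_prod_type,
    Fin.sum_univ_two, hs]
  norm_num

/-- For `λ = 1/√3` the two-qubit channel `E_λ ⊗ E_λ` is
entanglement-annihilating (it maps every two-qubit state to a separable state)
but it is not entanglement-breaking: applying `(E_λ ⊗ E_λ) ⊗ id` to the GHZ state
produces a state entangled across the `12|3` cut. -/
theorem stmt_17 :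
    (∀ ω : Matrix (Fin 2 × Fin 2) (Fin 2 × Fin 2) ℂ, IsState ω →
      IsSep (tensorMap (depol (Real.sqrt 3)⁻¹) (depol (Real.sqrt 3)⁻¹) ω)) ∧
    ¬ IsEB (tensorMap (depol (Real.sqrt 3)⁻¹) (depol (Real.sqrt 3)⁻¹)) ∧
    ¬ IsSep (rTensor (tensorMap (depol (Real.sqrt 3)⁻¹) (depol (Real.sqrt 3)⁻¹)) ghzState')
    := by
  have h3 : (0 : ℝ) < Real.sqrt 3 := Real.sqrt_pos.2 (by norm_num)
  have hl : ((Real.sqrt 3)⁻¹) ^ 2 = 1 / 3 := by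
    rw [inv_pow, Real.sq_sqrt (by norm_num)]; norm_num
  have h0 : 0 < (Real.sqrt 3)⁻¹ := inv_pos.2 h3
  exact ⟨part_one hl, fun h => part_three hl h0 (h 2 (by norm_num) ghzState' ghz_isState),
    part_three hl h0⟩
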